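/- Let n be a natural number with prime factorisation n = p_1^{α_1} ⋯ p_t^{α_t} (the p_i distinct primes). Then every skew brace of order n is right-nilpotent if and only if α_i ≤ 2 for every i and p_i does not divide p_j^{α_j} − 1 for all i ≠ j. -/

import Mathlib

/-- A skew (left) brace: a set with two group structures `(A,+)` and `(A,∘)`
(the latter written multiplicatively) satisfying
`a ∘ (b + c) = a ∘ b - a + a ∘ c`. -/
class SkewBrace (A : Type*) extends AddGroup A, Group A where
  skew_left_distrib : ∀ a b c : A, a * (b + c) = a * b - a + a * c

/-- The right series of a skew brace: `A^{(1)} = A` (index `0` here) and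
`A^{(m+1)} = A^{(m)} ∗ A`, the subgroup of `(A,+)` generated by the star
products `a ∗ b = -a + a ∘ b - b` with `a ∈ A^{(m)}`, `b ∈ A`. -/
def rightSeries (A : Type*) [SkewBrace A] : ℕ → AddSubgroup A
  | 0 => ⊤
  | m + 1 => AddSubgroup.closure
      {x : A | ∃ a ∈ rightSeries A m, ∃ b : A, x = -a + a * b - b}

/-- A skew brace is right-nilpotent if `A^{(m)} = {0}` for some `m`. -/
def IsRightNilpotent (A : Type*) [SkewBrace A] : Prop :=
  ∃ m : ℕ, rightSeries A m = ⊥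

/-!
If `n` satisfies the arithmetic condition, every group of order `n` is abelian: its Sylow subgroups
are abelian and central in their normalizers, so by Burnside's transfer theorem the commutators lie
in a normal `p`-complement for every `p`. A skew brace of order `n` is then a finite commutative
radical ring under `(+, ∗)`, hence nilpotent, and its right series consists of powers of the ring.

Conversely, the property of the theorem passes from `n` to its divisors, because one can multiply by
an arbitrary skew brace. This leaves two obstructions: a skew brace of order `p ^ 3` whose
multiplicative group is a Heisenberg group, and for `p ∣ q ^ k - 1` the skew brace `a ∘ b = b + a`
on the group `𝔽_{q ^ k} ⋊ C_p`, whose star product is a commutator. In both, some nonzero subset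
consists of star products of its own elements with elements of the skew brace, so every term of the
right series contains it.
-/

section AbelianGroups

theorem eq_top_of_forall_exists_sylow_le {G : Type*} [Group G] [Finite G] {H : Subgroup G}
    (hH : ∀ p [Fact p.Prime], p ∣ Nat.card G → ∃ P : Sylow p G, (P : Subgroup G) ≤ H) : H = ⊤ := by
  rw [← Subgroup.index_eq_one]
  by_contra hindex
  obtain ⟨p, hp, hdvd⟩ := Nat.exists_prime_and_dvd hindex
  have : Fact p.Prime := ⟨hp⟩
  obtain ⟨P, hP⟩ := hH p (hdvd.trans H.index_dvd_card)
  exact P.not_dvd_index (hdvd.trans (Subgroup.index_dvd_of_le hP))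

theorem monoidHom_mulAut_eq_one_of_not_dvd {R P : Type*} [Group R] [Group P] {r p k : ℕ}
    [Fact r.Prime] [Fact p.Prime] (hR : IsPGroup r R) (hP : Nat.card P = p ^ k) (hrp : r ≠ p)
    (hr : ∀ i, 0 < i → i ≤ k → ¬ r ∣ p ^ i - 1) (φ : R →* MulAut P) : φ = 1 := by
  have hp : p.Prime := Fact.out
  have : Finite P := Nat.finite_of_card_ne_zero (hP ▸ pow_ne_zero k hp.ne_zero)
  let _ : MulDistribMulAction R P := .compHom P φ
  obtain ⟨j, hjk, hj⟩ :=
    (Nat.dvd_prime_pow hp).1 (hP ▸ (FixedPoints.subgroup R P).card_subgroup_dvd_card)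
  have hmod : p ^ j ≡ p ^ k [MOD r] := by
    rw [← hP, ← hj]
    exact (hR.card_modEq_card_fixedPoints P).symm
  have hdvd : r ∣ p ^ j * (p ^ (k - j) - 1) := by
    rw [Nat.mul_sub_one, ← pow_add, Nat.add_sub_cancel' hjk]
    exact (Nat.modEq_iff_dvd' (Nat.pow_le_pow_right hp.pos hjk)).1 hmod
  have hcop : r.Coprime (p ^ j) := ((Nat.coprime_primes Fact.out hp).2 hrp).pow_right j
  have hkj : k - j = 0 := by
    by_contra hne
    exact hr (k - j) (Nat.pos_of_ne_zero hne) (k.sub_le j) (hcop.dvd_of_dvd_mul_left hdvd)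
  have htop : FixedPoints.subgroup R P = ⊤ :=
    Subgroup.eq_top_of_card_eq _ (by rw [hj, hP, show j = k by omega])
  ext g x
  exact (htop ▸ Subgroup.mem_top x : x ∈ FixedPoints.subgroup R P) g

theorem normalizer_le_centralizer_of_not_dvd {G : Type*} [Group G] [Finite G] {p k : ℕ}
    [Fact p.Prime] (P : Sylow p G) [IsMulCommutative P] (hP : Nat.card P = p ^ k)
    (hG : ∀ r, r.Prime → r ∣ Nat.card G → r ≠ p → ∀ i, 0 < i → i ≤ k → ¬ r ∣ p ^ i - 1) :
    Subgroup.normalizer (P : Set G) ≤ Subgroup.centralizer (P : Set G) := by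
  let φ := (P : Subgroup G).normalizerMonoidHom
  suffices hφ : φ.ker = ⊤ by
    rwa [Subgroup.normalizerMonoidHom_ker, Subgroup.subgroupOf_eq_top] at hφ
  refine eq_top_of_forall_exists_sylow_le fun r _ hr => ?_
  obtain rfl | hrp := eq_or_ne r p
  · refine ⟨P.subtype Subgroup.le_normalizer, ?_⟩
    rw [Subgroup.normalizerMonoidHom_ker]
    exact Subgroup.comap_mono (Subgroup.le_centralizer (P : Subgroup G))
  · obtain ⟨R⟩ : Nonempty (Sylow r (Subgroup.normalizer (P : Set G))) := inferInstance
    refine ⟨R, ?_⟩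
    have hrG : r ∣ Nat.card G := hr.trans (Subgroup.card_subgroup_dvd_card _)
    have hφR : φ.comp R.toSubgroup.subtype = 1 :=
      monoidHom_mulAut_eq_one_of_not_dvd R.2 hP hrp (hG r Fact.out hrG hrp) _
    exact fun g hg => MonoidHom.mem_ker.2 (DFunLike.congr_fun hφR (⟨g, hg⟩ : R))

open scoped commutatorElement in
theorem isMulCommutative_of_normalizer_le_centralizer {G : Type*} [Group G] [Finite G]
    (hG : ∀ p [Fact p.Prime], ∃ P : Sylow p G,
      Subgroup.normalizer (P : Set G) ≤ Subgroup.centralizer (P : Set G)) :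
    IsMulCommutative G := by
  refine .of_comm fun a b => ?_
  rw [← commutatorElement_eq_one_iff_mul_comm, ← orderOf_eq_one_iff]
  by_contra horder
  obtain ⟨p, hp, hdvd⟩ := Nat.exists_prime_and_dvd horder
  have : Fact p.Prime := ⟨hp⟩
  obtain ⟨P, hP⟩ := hG p
  have : IsMulCommutative P :=
    .of_comm fun x y => Subtype.ext (hP (Subgroup.le_normalizer y.2) x x.2)
  have hmem : ⁅a, b⁆ ∈ (MonoidHom.transferSylow P hP).ker := by
    rw [MonoidHom.mem_ker, map_commutatorElement, commutatorElement_eq_one_iff_mul_comm]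
    exact mul_comm' _ _
  exact MonoidHom.not_dvd_card_ker_transferSylow P hP
    (hdvd.trans (Subgroup.orderOf_dvd_natCard _ hmem))

theorem isMulCommutative_of_card_eq_prime_pow_of_le_two {G : Type*} [Group G] {p k : ℕ}
    [Fact p.Prime] (hk : k ≤ 2) (hG : Nat.card G = p ^ k) : IsMulCommutative G := by
  interval_cases k
  · have : Subsingleton G := (Nat.card_eq_one_iff_unique.1 (by simpa using hG)).1
    exact .of_comm fun _ _ => Subsingleton.elim _ _
  · have : IsCyclic G := isCyclic_of_prime_card (by simpa using hG)
    exact .of_comm IsCyclic.commGroup.mul_comm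
  · exact IsPGroup.isMulCommutative_of_card_eq_prime_sq hG

theorem isMulCommutative_of_forall_factorization_le_two {G : Type*} [Group G] [Finite G] {n : ℕ}
    (hn : Nat.card G = n) (hle : ∀ p ∈ n.primeFactors, n.factorization p ≤ 2)
    (hdvd : ∀ p ∈ n.primeFactors, ∀ q ∈ n.primeFactors, p ≠ q →
      ¬ p ∣ q ^ n.factorization q - 1) : IsMulCommutative G := by
  have hn0 : n ≠ 0 := hn ▸ Nat.card_pos.ne'
  refine isMulCommutative_of_normalizer_le_centralizer fun p _ => ?_
  obtain ⟨P⟩ : Nonempty (Sylow p G) := inferInstance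
  have hcard : Nat.card P = p ^ n.factorization p := by rw [P.card_eq_multiplicity, hn]
  have hp2 : n.factorization p ≤ 2 := by
    by_cases hp : p ∈ n.primeFactors
    · exact hle p hp
    · rw [Finsupp.notMem_support_iff.1 hp]
      exact Nat.zero_le 2
  have : IsMulCommutative P := isMulCommutative_of_card_eq_prime_pow_of_le_two hp2 hcard
  refine ⟨P, normalizer_le_centralizer_of_not_dvd P hcard fun r hr hrn hrp i hi hik hri => ?_⟩
  have hp : p ∈ n.primeFactors := Finsupp.mem_support_iff.2 (show n.factorization p ≠ 0 by omega)
  -- As the exponent is at most `2`, every positive `i` up to it divides it.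
  have hi_dvd : i ∣ n.factorization p := by
    interval_cases n.factorization p <;> interval_cases i <;> decide
  exact hdvd r (Nat.mem_primeFactors.2 ⟨hr, hn ▸ hrn, hn0⟩) p hp hrp
    (hri.trans (Nat.pow_sub_one_dvd_pow_sub_one p hi_dvd))

end AbelianGroups

section NilpotentRings

theorem isNilpotent_of_finite_of_le_jacobson_bot {R : Type*} [CommRing R] {J : Ideal R}
    (hfin : (J : Set R).Finite) (hJ : J ≤ Ideal.jacobson ⊥) : IsNilpotent J := by
  have hfg : J.FG := ⟨hfin.toFinset, by rw [hfin.coe_toFinset, Ideal.span_eq]⟩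
  refine hfg.isNilpotent_iff_le_nilradical.2 fun x hx => ?_
  have hpow (k : ℕ) : x ^ (k + 1) ∈ J := Ideal.pow_mem_of_mem J hx _ k.succ_pos
  obtain ⟨i, -, j, -, hij, heq⟩ :=
    Set.infinite_univ.exists_lt_map_eq_of_mapsTo (fun k _ => hpow k) hfin
  have hunit : IsUnit (-x ^ (j - i) + 1) := by
    obtain ⟨d, hd⟩ := Nat.exists_eq_add_of_lt hij
    rw [show j - i = d + 1 by omega, neg_eq_neg_one_mul, mul_comm]
    exact Ideal.mem_jacobson_bot.1 (hJ (hpow d)) (-1)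
  refine mem_nilradical.2 ⟨i + 1, hunit.mul_left_eq_zero.1 ?_⟩
  rw [mul_add, mul_neg, ← pow_add, show i + 1 + (j - i) = j + 1 by omega, ← heq]
  ring

theorem isNilpotent_ker_fstHom_of_forall_isQuasiregular {N : Type*} [NonUnitalCommRing N]
    [Finite N] (hN : ∀ a : N, IsQuasiregular a) :
    IsNilpotent (RingHom.ker (Unitization.fstHom ℤ N)) := by
  have hrange {x : Unitization ℤ N} (hx : x ∈ RingHom.ker (Unitization.fstHom ℤ N)) :
      ∃ a : N, (a : Unitization ℤ N) = x :=
    ⟨x.snd, Unitization.ext (RingHom.mem_ker.1 hx).symm rfl⟩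
  refine isNilpotent_of_finite_of_le_jacobson_bot
    ((Set.finite_range Unitization.inr).subset fun x hx => hrange hx) fun x hx => ?_
  rw [Ideal.mem_jacobson_bot]
  intro y
  obtain ⟨a, ha⟩ := hrange (Ideal.mul_mem_right y _ hx)
  rw [← ha, add_comm, ← isQuasiregular_iff_isUnit, Unitization.isQuasiregular_inr_iff]
  exact hN a

end NilpotentRings

namespace SkewBrace

section StarProduct

variable {A : Type*} [SkewBrace A]

/-- The star product `a ∗ b = -a + a ∘ b - b`. -/
def starProd (a b : A) : A := -a + a * b - b

theorem one_eq_zero : (1 : A) = 0 := by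
  simpa using skew_left_distrib (1 : A) 0 0

theorem mul_eq_add_starProd_add (a b : A) : a * b = a + starProd a b + b := by
  simp only [starProd, sub_eq_add_neg, add_assoc, neg_add_cancel, add_zero, add_neg_cancel_left]

theorem starProd_zero (a : A) : starProd a 0 = 0 := by
  rw [starProd, ← one_eq_zero, mul_one, one_eq_zero, neg_add_cancel, sub_zero]

theorem zero_starProd (a : A) : starProd 0 a = 0 := by
  rw [starProd, ← one_eq_zero, one_mul, one_eq_zero, neg_zero, zero_add, sub_self]

theorem starProd_mem_rightSeries_succ {k : ℕ} {a : A} (ha : a ∈ rightSeries A k) (b : A) :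
    starProd a b ∈ rightSeries A (k + 1) :=
  AddSubgroup.subset_closure ⟨a, ha, b, rfl⟩

theorem rightSeries_succ_le {k : ℕ} {H : AddSubgroup A}
    (hH : ∀ a ∈ rightSeries A k, ∀ b, starProd a b ∈ H) : rightSeries A (k + 1) ≤ H :=
  (AddSubgroup.closure_le H).2 fun _ ⟨a, ha, b, hab⟩ => hab ▸ hH a ha b

theorem not_isRightNilpotent_of_forall_mem_eq_starProd {S : Set A}
    (hS : ∀ x ∈ S, ∃ a ∈ S, ∃ b, starProd a b = x) {x : A} (hx : x ∈ S) (hx0 : x ≠ 0) :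
    ¬ IsRightNilpotent A := by
  have hmem (k : ℕ) : ∀ x ∈ S, x ∈ rightSeries A k := by
    induction k with
    | zero => exact fun x _ => AddSubgroup.mem_top x
    | succ k ih =>
      intro x hx
      obtain ⟨a, ha, b, rfl⟩ := hS x hx
      exact starProd_mem_rightSeries_succ (ih a ha) b
  rintro ⟨m, hm⟩
  exact hx0 (AddSubgroup.mem_bot.1 (hm ▸ hmem m x hx))

theorem map_mem_pow_of_mem_rightSeries {R : Type*} [CommRing R] {J : Ideal R} {f : A →+ R}
    (hf : ∀ a, f a ∈ J) (hmul : ∀ a b, f (starProd a b) = f a * f b) {k : ℕ} {a : A}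
    (ha : a ∈ rightSeries A k) : f a ∈ J ^ (k + 1) := by
  suffices rightSeries A k ≤ (J ^ (k + 1)).toAddSubgroup.comap f from this ha
  clear ha
  induction k with
  | zero =>
    intro a _
    simpa using hf a
  | succ k ih =>
    refine rightSeries_succ_le fun a ha b => ?_
    rw [AddSubgroup.mem_comap, hmul, pow_succ]
    exact Ideal.mul_mem_mul (ih ha) (hf b)

theorem isRightNilpotent_of_forall_isQuasiregular {N : Type*} [NonUnitalCommRing N] [Finite N]
    (hN : ∀ a : N, IsQuasiregular a) {f : A →+ N} (hinj : Function.Injective f)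
    (hmul : ∀ a b, f (starProd a b) = f a * f b) : IsRightNilpotent A := by
  obtain ⟨m, hm⟩ := isNilpotent_ker_fstHom_of_forall_isQuasiregular hN
  let ι : A →+ Unitization ℤ N := (Unitization.inrNonUnitalAlgHom ℤ N : N →+ _).comp f
  have hι_mem (a : A) : ι a ∈ RingHom.ker (Unitization.fstHom ℤ N) :=
    RingHom.mem_ker.2 (Unitization.fst_inr ℤ (f a))
  have hι_mul (a b : A) : ι (starProd a b) = ι a * ι b :=
    (congrArg Unitization.inr (hmul a b)).trans (Unitization.inr_mul ℤ _ _)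
  refine ⟨m, eq_bot_iff.2 fun a ha => hinj (Unitization.inr_injective (R := ℤ) ?_)⟩
  have hmem := map_mem_pow_of_mem_rightSeries (R := Unitization ℤ N) hι_mem hι_mul ha
  rw [pow_succ, hm, zero_mul] at hmem
  exact hmem.trans (map_zero ι).symm

end StarProduct

section RadicalRing

/-- The ring `(A, +, ∗)` of a skew brace `A` both of whose groups are abelian. It is a type synonym
because the multiplication of `A` itself is `∘`. -/
def RadicalRing (A : Type*) : Type _ := A

variable {A : Type*} [SkewBrace A] [IsAddCommutative A]

open scoped IsMulCommutative in
theorem starProd_add (a b c : A) : starProd a (b + c) = starProd a b + starProd a c := by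
  simp only [starProd, skew_left_distrib]
  abel

variable [IsMulCommutative A]

open scoped IsMulCommutative in
theorem starProd_comm (a b : A) : starProd a b = starProd b a := by
  simp only [starProd, mul_comm' a b]
  abel

theorem add_starProd (a b c : A) : starProd (a + b) c = starProd a c + starProd b c := by
  simp only [starProd_comm _ c, starProd_add]

open scoped IsMulCommutative in
theorem starProd_assoc (a b c : A) :
    starProd (starProd a b) c = starProd a (starProd b c) := by
  have hassoc := mul_assoc a b c
  simp only [mul_eq_add_starProd_add, starProd_add, add_starProd] at hassoc
  rw [← sub_eq_zero] at hassoc ⊢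
  rw [← hassoc]
  abel

instance : NonUnitalCommRing (RadicalRing A) where
  toAddGroup := inferInstanceAs (AddGroup A)
  add_comm := add_comm' (M := A)
  mul := starProd (A := A)
  left_distrib := starProd_add (A := A)
  right_distrib := add_starProd (A := A)
  zero_mul := zero_starProd (A := A)
  mul_zero := starProd_zero (A := A)
  mul_assoc := starProd_assoc (A := A)
  mul_comm := starProd_comm (A := A)

/-- The identity map from a skew brace to its ring. -/
def RadicalRing.of : A ≃+ RadicalRing A := AddEquiv.refl A

theorem RadicalRing.of_starProd (a b : A) : of (starProd a b) = of a * of b := rfl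

theorem RadicalRing.isQuasiregular (a : RadicalRing A) : IsQuasiregular a := by
  obtain ⟨a, rfl⟩ := of.surjective a
  have hinv : of a + of a⁻¹ + of a * of a⁻¹ = 0 := by
    rw [add_right_comm, ← of_starProd, ← map_add, ← map_add, ← mul_eq_add_starProd_add,
      mul_inv_cancel, one_eq_zero, map_zero]
  refine isQuasiregular_iff.2 ⟨of a⁻¹, ?_, ?_⟩
  · rw [add_comm (of a⁻¹), hinv]
  · rw [mul_comm (of a⁻¹), hinv]

theorem isRightNilpotent_of_isMulCommutative [Finite A] : IsRightNilpotent A :=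
  have : Finite (RadicalRing A) := ‹Finite A›
  isRightNilpotent_of_forall_isQuasiregular RadicalRing.isQuasiregular
    (f := (RadicalRing.of (A := A)).toAddMonoidHom) RadicalRing.of.injective RadicalRing.of_starProd

end RadicalRing

theorem isRightNilpotent_of_forall_factorization_le_two {A : Type*} [SkewBrace A] [Finite A] {n : ℕ}
    (hn : Nat.card A = n) (hle : ∀ p ∈ n.primeFactors, n.factorization p ≤ 2)
    (hdvd : ∀ p ∈ n.primeFactors, ∀ q ∈ n.primeFactors, p ≠ q →
      ¬ p ∣ q ^ n.factorization q - 1) : IsRightNilpotent A := by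
  have : IsMulCommutative A := isMulCommutative_of_forall_factorization_le_two hn hle hdvd
  have : IsMulCommutative (Multiplicative A) :=
    isMulCommutative_of_forall_factorization_le_two hn hle hdvd
  have : IsAddCommutative A :=
    .of_comm fun a b => mul_comm' (Multiplicative.ofAdd a) (Multiplicative.ofAdd b)
  exact isRightNilpotent_of_isMulCommutative

section Prod

/-- The direct product of two skew braces. -/
instance {A B : Type*} [SkewBrace A] [SkewBrace B] : SkewBrace (A × B) where
  toAddGroup := inferInstance
  toGroup := inferInstance
  skew_left_distrib a b c :=
    Prod.ext (skew_left_distrib a.1 b.1 c.1) (skew_left_distrib a.2 b.2 c.2)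

variable {A B : Type*} [SkewBrace A] [SkewBrace B]

theorem rightSeries_le_map {f : A →+ B} (hf : Function.Surjective f)
    (hmul : ∀ a b, f (a * b) = f a * f b) (k : ℕ) : rightSeries B k ≤ (rightSeries A k).map f := by
  induction k with
  | zero => exact (AddSubgroup.map_top_of_surjective f hf).ge
  | succ k ih =>
    refine rightSeries_succ_le fun x hx y => ?_
    obtain ⟨a, ha, rfl⟩ := ih hx
    obtain ⟨b, rfl⟩ := hf y
    exact ⟨starProd a b, starProd_mem_rightSeries_succ ha b, by simp [starProd, hmul]⟩

theorem isRightNilpotent_of_surjective (hA : IsRightNilpotent A) {f : A →+ B}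
    (hf : Function.Surjective f) (hmul : ∀ a b, f (a * b) = f a * f b) : IsRightNilpotent B := by
  obtain ⟨m, hm⟩ := hA
  exact ⟨m, by simpa [hm] using rightSeries_le_map hf hmul m⟩

end Prod

section AlmostTrivial

/-- The almost trivial skew brace of a group `G`: its addition is the multiplication of `G`, and
`a ∘ b = b + a`. -/
def AlmostTrivial (G : Type*) : Type _ := G

namespace AlmostTrivial

/-- The identity map from a group to its almost trivial skew brace. -/
def of {G : Type*} : G ≃ AlmostTrivial G := Equiv.refl G

instance (G : Type*) [Group G] : AddGroup (AlmostTrivial G) :=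
  inferInstanceAs (AddGroup (Additive G))

instance (G : Type*) [Group G] : SkewBrace (AlmostTrivial G) where
  mul a b := b + a
  mul_assoc a b c := (add_assoc c b a).symm
  one := 0
  one_mul := add_zero
  mul_one := zero_add
  inv a := -a
  inv_mul_cancel := add_neg_cancel
  skew_left_distrib a b c := show b + c + a = b + a - a + (c + a) by
    rw [add_sub_cancel_right, add_assoc]

theorem starProd_of {G : Type*} [Group G] (a b : G) :
    starProd (of a) (of b) = of (a⁻¹ * (b * a) / b) := rfl

theorem not_isRightNilpotent_semidirectProduct {N H : Type*} [Group N] [Group H] [Nontrivial N]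
    {φ : H →* MulAut N} {h : H} (hh : Function.Surjective fun n => n⁻¹ * φ h n) :
    ¬ IsRightNilpotent (AlmostTrivial (N ⋊[φ] H)) := by
  obtain ⟨n, hn⟩ := exists_ne (1 : N)
  refine not_isRightNilpotent_of_forall_mem_eq_starProd
    (S := Set.range fun n : N => of (SemidirectProduct.inl n)) ?_ ⟨n, rfl⟩
    (of.injective.ne (SemidirectProduct.inl_injective.ne hn))
  rintro _ ⟨x, rfl⟩
  obtain ⟨n, rfl⟩ := hh x
  refine ⟨_, ⟨n, rfl⟩, of (.inr h), (starProd_of _ _).trans (congrArg of ?_)⟩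
  dsimp only
  rw [map_mul, SemidirectProduct.inl_aut, map_inv, map_inv]
  simp only [div_eq_mul_inv, mul_assoc]

end AlmostTrivial

theorem exists_not_isRightNilpotent_of_prime_dvd {p q k : ℕ} [Fact p.Prime] [Fact q.Prime]
    (hk : k ≠ 0) (hp : p ∣ q ^ k - 1) :
    ∃ (A : Type) (_ : SkewBrace A), Nat.card A = q ^ k * p ∧ ¬ IsRightNilpotent A := by
  let F := GaloisField q k
  have hF : Nat.card F = q ^ k := GaloisField.card q k hk
  have : Finite F := Nat.finite_of_card_ne_zero (hF ▸ pow_ne_zero k (NeZero.ne q))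
  obtain ⟨u, hu⟩ := exists_prime_orderOf_dvd_card' (G := Fˣ) p (by rwa [Nat.card_units, hF])
  have hu1 : (u : F) - 1 ≠ 0 := by
    rw [sub_ne_zero, ne_eq, Units.val_eq_one, ← orderOf_eq_one_iff, hu]
    exact Fact.out (p := p.Prime) |>.ne_one
  let φ : Subgroup.zpowers u →* MulAut (Multiplicative F) :=
    ((MulAutMultiplicative F).symm.toMonoidHom.comp (DistribMulAction.toAddAut Fˣ F)).comp
      (Subgroup.zpowers u).subtype
  refine ⟨AlmostTrivial (Multiplicative F ⋊[φ] Subgroup.zpowers u), inferInstance, ?_,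
    AlmostTrivial.not_isRightNilpotent_semidirectProduct
      (h := ⟨u, Subgroup.mem_zpowers u⟩) fun x => ?_⟩
  · exact SemidirectProduct.card.trans (by rw [Nat.card_zpowers, hu]; exact congrArg (· * p) hF)
  · obtain ⟨y, hy⟩ : ∃ y : F, -y + u * y = x.toAdd :=
      ⟨x.toAdd / (u - 1), by rw [neg_add_eq_sub, ← sub_one_mul, mul_div_cancel₀ _ hu1]⟩
    exact ⟨.ofAdd y, congrArg Multiplicative.ofAdd hy⟩

end AlmostTrivial

theorem isRightNilpotent_of_card_dvd {n : ℕ} (hn : n ≠ 0)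
    (H : ∀ (A : Type) [Fintype A] [SkewBrace A], Fintype.card A = n → IsRightNilpotent A)
    (B : Type) [SkewBrace B] (hB : Nat.card B ∣ n) : IsRightNilpotent B := by
  obtain ⟨m, rfl⟩ := hB
  have : Finite B := Nat.finite_of_card_ne_zero (left_ne_zero_of_mul hn)
  have : NeZero m := ⟨right_ne_zero_of_mul hn⟩
  let C := AlmostTrivial (Multiplicative (ZMod m))
  have hC : Nat.card C = m := Nat.card_zmod m
  have : Finite C := Nat.finite_of_card_ne_zero (hC ▸ NeZero.ne m)
  have : Fintype (B × C) := Fintype.ofFinite _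
  have hBC : IsRightNilpotent (B × C) :=
    H (B × C) (by rw [← Nat.card_eq_fintype_card, Nat.card_prod, hC])
  exact isRightNilpotent_of_surjective hBC (f := AddMonoidHom.fst B C) Prod.fst_surjective
    fun _ _ => rfl

end SkewBrace

/-- The skew brace on `R × R × R` that obstructs right nilpotency at `p ^ 3`, for `R = ZMod p`.
A triple is multiplied as the unitriangular matrix with superdiagonal `(z, x)` and corner `y`, and
added as in the central extension of the `(x, y)`-plane by an alternating form. -/
@[ext]
structure HeisenbergBrace (R : Type*) where
  x : R
  y : R
  z : R

namespace HeisenbergBrace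

theorem card_eq (R : Type*) : Nat.card (HeisenbergBrace R) = Nat.card R ^ 3 := by
  let e : HeisenbergBrace R ≃ R × R × R :=
    { toFun := fun a => (a.x, a.y, a.z), invFun := fun a => ⟨a.1, a.2.1, a.2.2⟩ }
  rw [Nat.card_congr e, Nat.card_prod, Nat.card_prod]
  ring

variable {R : Type*} [CommRing R]

instance : Zero (HeisenbergBrace R) := ⟨⟨0, 0, 0⟩⟩

instance : Add (HeisenbergBrace R) :=
  ⟨fun a b => ⟨a.x + b.x, a.y + b.y, a.z + b.z + a.x * b.y - b.x * a.y⟩⟩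

instance : Neg (HeisenbergBrace R) := ⟨fun a => ⟨-a.x, -a.y, -a.z⟩⟩

instance : One (HeisenbergBrace R) := ⟨⟨0, 0, 0⟩⟩

instance : Mul (HeisenbergBrace R) :=
  ⟨fun a b => ⟨a.x + b.x, a.y + b.y + a.z * b.x, a.z + b.z⟩⟩

instance : Inv (HeisenbergBrace R) := ⟨fun a => ⟨-a.x, -a.y + a.z * a.x, -a.z⟩⟩

theorem zero_def : (0 : HeisenbergBrace R) = ⟨0, 0, 0⟩ := rfl

theorem add_def (a b : HeisenbergBrace R) :
    a + b = ⟨a.x + b.x, a.y + b.y, a.z + b.z + a.x * b.y - b.x * a.y⟩ := rfl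

theorem neg_def (a : HeisenbergBrace R) : -a = ⟨-a.x, -a.y, -a.z⟩ := rfl

theorem one_def : (1 : HeisenbergBrace R) = ⟨0, 0, 0⟩ := rfl

theorem mul_def (a b : HeisenbergBrace R) :
    a * b = ⟨a.x + b.x, a.y + b.y + a.z * b.x, a.z + b.z⟩ := rfl

theorem inv_def (a : HeisenbergBrace R) : a⁻¹ = ⟨-a.x, -a.y + a.z * a.x, -a.z⟩ := rfl

instance : AddGroup (HeisenbergBrace R) :=
  .ofLeftAxioms
    (fun a b c => by ext <;> simp only [add_def] <;> ring)
    (fun a => by ext <;> simp [add_def, zero_def])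
    (fun a => by ext <;> simp only [add_def, neg_def, zero_def] <;> ring)

instance : Group (HeisenbergBrace R) :=
  .ofLeftAxioms
    (fun a b c => by ext <;> simp only [mul_def] <;> ring)
    (fun a => by ext <;> simp [mul_def, one_def])
    (fun a => by ext <;> simp only [mul_def, inv_def, one_def] <;> ring)

instance : SkewBrace (HeisenbergBrace R) where
  skew_left_distrib a b c := by
    rw [sub_eq_add_neg]
    ext <;> simp only [mul_def, add_def, neg_def] <;> ring

theorem starProd_mk_zero (y z : R) :
    SkewBrace.starProd (⟨0, y, z⟩ : HeisenbergBrace R) ⟨1, 0, 0⟩ = ⟨0, z, y + z⟩ := by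
  rw [SkewBrace.starProd, sub_eq_add_neg]
  ext <;> simp only [mul_def, add_def, neg_def] <;> ring

theorem not_isRightNilpotent [Nontrivial R] : ¬ IsRightNilpotent (HeisenbergBrace R) := by
  refine SkewBrace.not_isRightNilpotent_of_forall_mem_eq_starProd (S := {a | a.x = 0}) ?_
    (x := ⟨0, 1, 0⟩) rfl fun h => one_ne_zero (congrArg HeisenbergBrace.y h)
  rintro ⟨_, y, z⟩ rfl
  exact ⟨⟨0, z - y, y⟩, rfl, ⟨1, 0, 0⟩, by rw [starProd_mk_zero, sub_add_cancel]⟩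

end HeisenbergBrace

/-- Every skew brace of order `n` is right-nilpotent iff the prime
factorisation of `n` is cube-free and `p ∤ q^{α_q} - 1` for distinct primes
`p, q` dividing `n`. -/
theorem every_skewBrace_is_right_nilpotent_iff (n : ℕ) (hn : 0 < n) :
    (∀ (A : Type) [Fintype A] [SkewBrace A], Fintype.card A = n →
      IsRightNilpotent A) ↔
    ((∀ p ∈ n.primeFactors, n.factorization p ≤ 2) ∧
      (∀ p ∈ n.primeFactors, ∀ q ∈ n.primeFactors, p ≠ q →
        ¬ p ∣ q ^ n.factorization q - 1)) := by
  constructor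
  · intro H
    refine ⟨fun p hp => ?_, fun p hp q hq hpq hdvd => ?_⟩
    · by_contra! hp3
      have hcard : Nat.card (HeisenbergBrace (ZMod p)) ∣ n := by
        rw [HeisenbergBrace.card_eq, Nat.card_zmod]
        exact (pow_dvd_pow p hp3).trans (n.ordProj_dvd p)
      have : Fact p.Prime := ⟨Nat.prime_of_mem_primeFactors hp⟩
      exact HeisenbergBrace.not_isRightNilpotent
        (SkewBrace.isRightNilpotent_of_card_dvd hn.ne' H _ hcard)
    · have : Fact p.Prime := ⟨Nat.prime_of_mem_primeFactors hp⟩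
      have : Fact q.Prime := ⟨Nat.prime_of_mem_primeFactors hq⟩
      obtain ⟨B, _, hcard, hB⟩ := SkewBrace.exists_not_isRightNilpotent_of_prime_dvd
        (Finsupp.mem_support_iff.1 hq) hdvd
      have hcop : (q ^ n.factorization q).Coprime p :=
        ((Nat.coprime_primes Fact.out Fact.out).2 hpq.symm).pow_left _
      exact hB (SkewBrace.isRightNilpotent_of_card_dvd hn.ne' H B (hcard ▸
        hcop.mul_dvd_of_dvd_of_dvd (n.ordProj_dvd q) (Nat.dvd_of_mem_primeFactors hp)))
  · rintro ⟨hle, hdvd⟩ A _ _ hA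
    exact SkewBrace.isRightNilpotent_of_forall_factorization_le_two
      (Nat.card_eq_fintype_card.trans hA) hle hdvd
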